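/- Let n ≥ 2, suppose S is symmetric with S i i = 1 for every i and S i j ≤ 1 for all i, j, and let Γ* be a nonempty proper subset of Fin n that minimizes S_cross over all nonempty proper subsets of Fin n. Then at least one of the two parts of the partition has intra-group average similarity at least the overall average: S_{Γ*} / |Γ*|² ≥ S_total / n² or S_{(Γ*)ᶜ} / |(Γ*)ᶜ|² ≥ S_total / n². -/

import Mathlib

/-- Removing single elements from a minimizer bounds the cross similarity. -/
theorem cross_le_intra (n : ℕ) (S : Fin n → Fin n → ℝ)
    (hS : ∀ i j, S i j = S j i) (hdiag : ∀ i, S i i = 1)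
    (Γ : Finset (Fin n)) (hcard : 2 ≤ Γ.card)
    (hmin : ∀ Γ' : Finset (Fin n), Γ'.Nonempty → Γ' ≠ Finset.univ →
      (∑ i ∈ Γ, ∑ j ∈ Γᶜ, S i j) ≤ ∑ i ∈ Γ', ∑ j ∈ Γ'ᶜ, S i j) :
    (∑ i ∈ Γ, ∑ j ∈ Γᶜ, S i j) ≤ (∑ i ∈ Γ, ∑ j ∈ Γ, S i j) - Γ.card := by
  have key : ∀ i ∈ Γ, (∑ j ∈ Γᶜ, S i j) ≤ (∑ j ∈ Γ, S i j) - 1 := by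
    intro i hi
    have h1 : (Γ.erase i).Nonempty := by
      rw [← Finset.card_pos, Finset.card_erase_of_mem hi]; omega
    have h2 : Γ.erase i ≠ Finset.univ := by
      intro h
      have := Finset.mem_univ i
      rw [← h] at this
      simp at this
    have h3 := hmin _ h1 h2
    have hi' : i ∉ Γᶜ := by simpa using hi
    rw [Finset.compl_erase] at h3
    simp only [Finset.sum_insert hi'] at h3
    rw [Finset.sum_add_distrib] at h3
    have e1 := Finset.sum_erase_add Γ (fun a => S a i) hi
    have e2 := Finset.sum_erase_add Γ (fun a => ∑ j ∈ Γᶜ, S a j) hi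
    have e3 : ∑ j ∈ Γ, S i j = ∑ a ∈ Γ, S a i := Finset.sum_congr rfl fun j _ => hS i j
    have e4 := hdiag i
    linarith
  have := Finset.sum_le_sum key
  rw [Finset.sum_sub_distrib] at this
  simpa using this

/-- If `Γ*` minimizes the cross similarity over all nonempty proper subsets of `Fin n`,
then at least one part of the partition has intra-group average similarity at least the
overall average. -/
theorem min_cut_part_average_ge (n : ℕ) (hn : 2 ≤ n) (S : Fin n → Fin n → ℝ)
    (hS : ∀ i j, S i j = S j i) (hdiag : ∀ i, S i i = 1) (hle : ∀ i j, S i j ≤ 1)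
    (Γ : Finset (Fin n)) (hne : Γ.Nonempty) (hprop : Γ ≠ Finset.univ)
    (hmin : ∀ Γ' : Finset (Fin n), Γ'.Nonempty → Γ' ≠ Finset.univ →
      (∑ i ∈ Γ, ∑ j ∈ Γᶜ, S i j) ≤ ∑ i ∈ Γ', ∑ j ∈ Γ'ᶜ, S i j) :
    (∑ i ∈ Γ, ∑ j ∈ Γ, S i j) / (Γ.card : ℝ) ^ 2 ≥
        (∑ i : Fin n, ∑ j : Fin n, S i j) / (n : ℝ) ^ 2 ∨
      (∑ i ∈ Γᶜ, ∑ j ∈ Γᶜ, S i j) / ((Γᶜ : Finset (Fin n)).card : ℝ) ^ 2 ≥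
        (∑ i : Fin n, ∑ j : Fin n, S i j) / (n : ℝ) ^ 2 := by
  have hk : 0 < Γ.card := Finset.card_pos.mpr hne
  have hcn : Γᶜ.Nonempty := by
    rw [Finset.nonempty_iff_ne_empty]
    intro h
    exact hprop (Finset.compl_eq_empty_iff Γ |>.mp h)
  have hm : 0 < (Γᶜ).card := Finset.card_pos.mpr hcn
  have hcomm : ∑ i ∈ Γᶜ, ∑ j ∈ Γ, S i j = ∑ i ∈ Γ, ∑ j ∈ Γᶜ, S i j := by
    rw [Finset.sum_comm]
    exact Finset.sum_congr rfl fun i _ => Finset.sum_congr rfl fun j _ => hS j i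
  have hsum : (Γ.card : ℝ) + ((Γᶜ).card : ℝ) = n := by
    have := Finset.card_add_card_compl Γ
    rw [Fintype.card_fin] at this
    exact_mod_cast this
  have hT : ∑ i : Fin n, ∑ j : Fin n, S i j = (∑ i ∈ Γ, ∑ j ∈ Γ, S i j)
      + (∑ i ∈ Γᶜ, ∑ j ∈ Γᶜ, S i j) + 2 * ∑ i ∈ Γ, ∑ j ∈ Γᶜ, S i j := by
    have h1 : ∀ i, ∑ j : Fin n, S i j = ∑ j ∈ Γ, S i j + ∑ j ∈ Γᶜ, S i j := fun i =>
      (Finset.sum_add_sum_compl Γ _).symm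
    simp only [h1]
    rw [← Finset.sum_add_sum_compl Γ, Finset.sum_add_distrib, Finset.sum_add_distrib, hcomm]
    ring
  have hn0 : (0 : ℝ) < (n : ℝ) ^ 2 := by positivity
  have ht1 : (∑ i : Fin n, ∑ j : Fin n, S i j) / (n : ℝ) ^ 2 ≤ 1 := by
    rw [div_le_one hn0]
    calc _ ≤ ∑ i : Fin n, ∑ j : Fin n, (1 : ℝ) :=
          Finset.sum_le_sum fun i _ => Finset.sum_le_sum fun j _ => hle i j
      _ = _ := by simp [sq]
  have hone : ∀ s : Finset (Fin n), s.card = 1 →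
      (∑ i ∈ s, ∑ j ∈ s, S i j) / (s.card : ℝ) ^ 2 = 1 := by
    intro s hs
    obtain ⟨a, rfl⟩ := Finset.card_eq_one.mp hs
    simp [hdiag]
  by_cases hk1 : Γ.card = 1
  · left; rw [hone _ hk1]; exact ht1
  by_cases hm1 : (Γᶜ).card = 1
  · right; rw [hone _ hm1]; exact ht1
  have hA := cross_le_intra n S hS hdiag Γ (by omega) hmin
  have hB := cross_le_intra n S hS hdiag Γᶜ (by omega) (by
    rw [compl_compl, hcomm]; exact hmin)
  rw [compl_compl, hcomm] at hB
  by_contra! hcon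
  obtain ⟨c1, c2⟩ := hcon
  have hk' : (0 : ℝ) < Γ.card := by exact_mod_cast hk
  have hm' : (0 : ℝ) < (Γᶜ).card := by exact_mod_cast hm
  rw [div_lt_iff₀ (by positivity)] at c1 c2
  have ht := div_mul_cancel₀ (∑ i : Fin n, ∑ j : Fin n, S i j) hn0.ne'
  generalize (∑ i : Fin n, ∑ j : Fin n, S i j) / (n : ℝ) ^ 2 = t at *
  rw [hT, ← hsum] at ht
  generalize (Γ.card : ℝ) = k at *
  generalize ((Γᶜ).card : ℝ) = m at *
  generalize ∑ i ∈ Γ, ∑ j ∈ Γᶜ, S i j = C at *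
  generalize ∑ i ∈ Γ, ∑ j ∈ Γ, S i j = A at *
  generalize ∑ i ∈ Γᶜ, ∑ j ∈ Γᶜ, S i j = B at *
  have hC : k * m * t < C := by nlinarith
  have p1 : 0 < k * ((k - m) * t) := by nlinarith
  have p2 : 0 < m * ((m - k) * t) := by nlinarith
  have q1 := (mul_pos_iff_of_pos_left hk').mp p1
  have q2 := (mul_pos_iff_of_pos_left hm').mp p2
  linarith
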